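/- Let L(x) = x/arsinh(x) for real x ≠ 0. Then for every real x ≠ 0, L(x)⁵ = (x⁴(1+x²)²/4!)·L⁽⁴⁾(x) + (x³(x²−2)(1+x²)/12)·L'''(x) + (x²(x⁴+10x²+12)/4!)·L''(x) − (x(x⁴+20x²+24)/4!)·L'(x) + ((x⁴+20x²+24)/4!)·L(x). -/

import Mathlib

/-- `L x = x / arsinh x`. -/
noncomputable def Lfun : ℝ → ℝ := fun x => x / Real.arsinh x

noncomputable def uu (y : ℝ) : ℝ := (Real.arsinh y)⁻¹
noncomputable def rr (y : ℝ) : ℝ := (√(1 + y ^ 2))⁻¹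

lemma rr_sq (y : ℝ) : rr y ^ 2 = (1 + y ^ 2)⁻¹ := by
  unfold rr
  rw [inv_pow, Real.sq_sqrt (by positivity)]

lemma uu_d (y : ℝ) (hy : y ≠ 0) : HasDerivAt uu (-(uu y) ^ 2 * rr y) y := by
  have h := (Real.hasDerivAt_arsinh y).inv (by simpa using hy)
  refine HasDerivAt.congr_deriv h ?_
  unfold uu rr
  ring

lemma rr_d (y : ℝ) : HasDerivAt rr (-y * (rr y) ^ 3) y := by
  have h1 : HasDerivAt (fun z : ℝ => 1 + z ^ 2) (2 * y) y := by
    simpa using ((hasDerivAt_id y).pow 2).const_add 1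
  have h0 : √(1 + y ^ 2) ≠ 0 := by positivity
  have h := (h1.sqrt (by positivity)).inv h0
  refine HasDerivAt.congr_deriv h ?_
  unfold rr
  field_simp

lemma mono_d (k : ℝ) (a b c : ℕ) (y : ℝ) (hy : y ≠ 0) :
    HasDerivAt (fun z => k * z ^ a * uu z ^ b * rr z ^ c)
      (k * ((a * y ^ (a - 1)) * uu y ^ b * rr y ^ c
        + y ^ a * (b * uu y ^ (b - 1) * (-(uu y) ^ 2 * rr y)) * rr y ^ c
        + y ^ a * uu y ^ b * (c * rr y ^ (c - 1) * (-y * (rr y) ^ 3)))) y := by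
  have h := ((((hasDerivAt_pow a y).const_mul k).mul ((uu_d y hy).pow b)).mul ((rr_d y).pow c))
  refine HasDerivAt.congr_deriv h ?_
  try simp only [Pi.mul_apply, Pi.pow_apply]
  ring

lemma step {n : ℕ} {p : ℝ → ℝ} {q : ℝ → ℝ} (h : ∀ y ≠ 0, iteratedDeriv n Lfun y = p y)
    (hd : ∀ y ≠ 0, HasDerivAt p (q y) y) : ∀ y ≠ 0, iteratedDeriv (n + 1) Lfun y = q y := by
  intro y hy
  rw [iteratedDeriv_succ]
  have : iteratedDeriv n Lfun =ᶠ[nhds y] p := by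
    filter_upwards [isOpen_ne.mem_nhds hy] with z hz using h z hz
  rw [this.deriv_eq]
  exact (hd y hy).deriv

lemma d0 : ∀ y ≠ 0, iteratedDeriv 0 Lfun y = (1) * y^1 * uu y^1 * rr y^0 := by
  intro y _
  simp [Lfun, uu, div_eq_mul_inv]

lemma d1 : ∀ y ≠ 0, iteratedDeriv 1 Lfun y = (1) * y^0 * uu y^1 * rr y^0 + (-1) * y^1 * uu y^2 * rr y^1 := by
  refine step d0 ?_
  intro y hy
  refine HasDerivAt.congr_deriv (mono_d (1) 1 1 0 y hy) ?_
  push_cast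
  ring

lemma d2 : ∀ y ≠ 0, iteratedDeriv 2 Lfun y = (-2) * y^0 * uu y^2 * rr y^1 + (2) * y^1 * uu y^3 * rr y^2 + (1) * y^2 * uu y^2 * rr y^3 := by
  refine step d1 ?_
  intro y hy
  refine HasDerivAt.congr_deriv ((mono_d (1) 0 1 0 y hy).add (mono_d (-1) 1 2 1 y hy)) ?_
  push_cast
  ring

lemma d3 : ∀ y ≠ 0, iteratedDeriv 3 Lfun y = (6) * y^0 * uu y^3 * rr y^2 + (4) * y^1 * uu y^2 * rr y^3 + (-6) * y^1 * uu y^4 * rr y^3 + (-6) * y^2 * uu y^3 * rr y^4 + (-3) * y^3 * uu y^2 * rr y^5 := by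
  refine step d2 ?_
  intro y hy
  refine HasDerivAt.congr_deriv (((mono_d (-2) 0 2 1 y hy).add (mono_d (2) 1 3 2 y hy)).add (mono_d (1) 2 2 3 y hy)) ?_
  push_cast
  ring

lemma d4 : ∀ y ≠ 0, iteratedDeriv 4 Lfun y = (-24) * y^0 * uu y^4 * rr y^3 + (-32) * y^1 * uu y^3 * rr y^4 + (4) * y^0 * uu y^2 * rr y^3 + (-21) * y^2 * uu y^2 * rr y^5 + (24) * y^1 * uu y^5 * rr y^4 + (36) * y^2 * uu y^4 * rr y^5 + (30) * y^3 * uu y^3 * rr y^6 + (15) * y^4 * uu y^2 * rr y^7 := by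
  refine step d3 ?_
  intro y hy
  refine HasDerivAt.congr_deriv (((((mono_d (6) 0 3 2 y hy).add (mono_d (4) 1 2 3 y hy)).add (mono_d (-6) 1 4 3 y hy)).add (mono_d (-6) 2 3 4 y hy)).add (mono_d (-3) 3 2 5 y hy)) ?_
  push_cast
  ring

theorem statement15 (x : ℝ) (hx : x ≠ 0) :
    Lfun x ^ 5 = x ^ 4 * (1 + x ^ 2) ^ 2 / 24 * iteratedDeriv 4 Lfun x
      + x ^ 3 * (x ^ 2 - 2) * (1 + x ^ 2) / 12 * iteratedDeriv 3 Lfun x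
      + x ^ 2 * (x ^ 4 + 10 * x ^ 2 + 12) / 24 * iteratedDeriv 2 Lfun x
      - x * (x ^ 4 + 20 * x ^ 2 + 24) / 24 * deriv Lfun x
      + (x ^ 4 + 20 * x ^ 2 + 24) / 24 * Lfun x := by
  have e0 := d0 x hx
  have e1 := d1 x hx
  rw [iteratedDeriv_zero] at e0
  rw [iteratedDeriv_one] at e1
  rw [d4 x hx, d3 x hx, d2 x hx, e1, e0]
  have hr := rr_sq x
  have h3 : rr x ^ 3 = rr x * (1 + x ^ 2)⁻¹ := by rw [← hr]; ring
  have h4 : rr x ^ 4 = ((1 + x ^ 2)⁻¹) ^ 2 := by rw [← hr]; ring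
  have h5 : rr x ^ 5 = rr x * ((1 + x ^ 2)⁻¹) ^ 2 := by rw [← hr]; ring
  have h6 : rr x ^ 6 = ((1 + x ^ 2)⁻¹) ^ 3 := by rw [← hr]; ring
  have h7 : rr x ^ 7 = rr x * ((1 + x ^ 2)⁻¹) ^ 3 := by rw [← hr]; ring
  rw [h7, h6, h5, h4, h3, hr]
  have h0 : 1 + x ^ 2 ≠ 0 := by positivity
  generalize rr x = r
  generalize uu x = u
  field_simp
  ring
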